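/- Let Q₂(2k) denote the number of Goldbach partitions of the even integer 2k. Then the limit, as n → ∞, of (Σ_{2<k≤n} k²·Q₂(2k)) / (n² · Σ_{2<k≤n} Q₂(2k)) equals 1/2. Equivalently, E(Gₙ²)/n² → 1/2 for the random variable Gₙ of a uniformly random Goldbach partition of an even integer in (4, 2n]. -/

import Mathlib

open Filter Topology Asymptotics MeasureTheory

/-- `Q2 k` is the number of Goldbach partitions of `2*k`, i.e. the number of
unordered pairs `{p, q}` of odd primes with `p + q = 2*k`. -/
def Q2 (k : ℕ) : ℕ :=
  ((Finset.range (2 * k + 1) ×ˢ Finset.range (2 * k + 1)).filter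
    (fun pq => pq.1.Prime ∧ pq.2.Prime ∧ Odd pq.1 ∧ Odd pq.2 ∧
      pq.1 ≤ pq.2 ∧ pq.1 + pq.2 = 2 * k)).card

/-- `fOdd z = Σ_{p odd prime} z^p`. -/
noncomputable def fOdd (z : ℝ) : ℝ := ∑' p : ℕ, if p.Prime ∧ Odd p then z ^ p else 0

/-- `fOdd' z = Σ_{p odd prime} p * z^(p-1)`, the derivative of `fOdd` on `(0,1)`. -/
noncomputable def fOdd' (z : ℝ) : ℝ :=
  ∑' p : ℕ, if p.Prime ∧ Odd p then (p : ℝ) * z ^ (p - 1) else 0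

/-- `fOdd'' z = Σ_{p odd prime} p * (p-1) * z^(p-2)`, the second derivative of `fOdd` on `(0,1)`. -/
noncomputable def fOdd'' (z : ℝ) : ℝ :=
  ∑' p : ℕ, if p.Prime ∧ Odd p then (p : ℝ) * ((p : ℝ) - 1) * z ^ (p - 2) else 0

/-- The prime-counting function at a real argument: the number of primes `≤ y`. -/
noncomputable def primePi (y : ℝ) : ℕ := Nat.primeCounting ⌊y⌋₊

/-! By the prime number theorem the number `S n` of odd primes up to `n` varies regularly with index
`1`: `S (t n) / S n → t`. Counting the pairs of odd primes with `p + q ≤ 2 n` by `∑ S (2 n - p)`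
over `p ≤ 2 n` gives about `S (2 n) ^ 2 / 2` ordered pairs, so `∑_{k ≤ n} Q2 k ∼ S n ^ 2`, which
varies regularly with index `2`. The distribution function of `Gₙ / n` therefore tends to `t ^ 2` on
`[0, 1]`, whose second moment is `∫ t ^ 2 * 2 t dt = 1 / 2`.

The prime number theorem comes from the Wiener–Ikehara theorem. If the Laplace transform of `f`
extends continuously to the imaginary axis, the Riemann–Lebesgue lemma shows that the averages of
`f` against translates of a kernel with compactly supported Fourier transform tend to `0`; for a
slowly decreasing `f`, narrow nonnegative kernels then force `f → 0`. -/

/-! ### Laplace transforms with continuous boundary values -/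

open FourierTransform in
lemma fourier_fourierChar_smul {E : Type*} [NormedAddCommGroup E] [NormedSpace ℂ E]
    (k : ℝ → E) (x y : ℝ) : 𝓕 (fun t : ℝ ↦ 𝐞 (t * y) • k t) x = 𝓕 k (x - y) := by
  simp only [Real.fourier_real_eq, smul_smul, ← AddChar.map_add_eq_mul]
  congr! 4
  ring

open FourierTransform in
lemma fourier_comp_div {E : Type*} [NormedAddCommGroup E] [NormedSpace ℂ E]
    (k : ℝ → E) {l : ℝ} (hl : 0 < l) (x : ℝ) :
    𝓕 (fun t : ℝ ↦ k (t / l)) x = l • 𝓕 k (l * x) := by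
  have h := Measure.integral_comp_div (fun t : ℝ ↦ 𝐞 (-(t * (l * x))) • k t) l
  rw [abs_of_pos hl] at h
  rw [Real.fourier_real_eq, Real.fourier_real_eq, ← h]
  congr! 5 with t
  field_simp

section BoundaryValues

open FourierTransform

variable {f : ℝ → ℂ} {C : ℝ} (hfm : Measurable f) (hfC : ∀ x, ‖f x‖ ≤ C) (hf0 : ∀ x ≤ 0, f x = 0)

include hfC hf0 in
lemma norm_mul_cexp_neg_le {δ : ℝ} (hδ : 0 ≤ δ) (x : ℝ) :
    ‖f x * Complex.exp (-δ * x)‖ ≤ C := by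
  rcases le_or_gt x 0 with hx | hx
  · simpa [hf0 x hx] using (norm_nonneg _).trans (hfC x)
  · have hexp : ‖Complex.exp (-δ * x)‖ ≤ 1 := by
      rw [Complex.norm_exp, Real.exp_le_one_iff]
      simpa using mul_nonneg hδ hx.le
    rw [norm_mul]
    exact (mul_le_of_le_one_right (norm_nonneg _) hexp).trans (hfC x)

include hfm hfC hf0

lemma integrable_mul_cexp_neg {s : ℂ} (hs : 0 < s.re) :
    Integrable fun x : ℝ ↦ f x * Complex.exp (-s * x) := by
  have hsupp : Function.support (fun x : ℝ ↦ f x * Complex.exp (-s * x)) ⊆ Set.Ioi 0 := by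
    intro x hx
    by_contra hx0
    exact hx (by simp [hf0 x (not_lt.mp hx0)])
  rw [← integrableOn_iff_integrable_of_support_subset hsupp]
  exact (integrableOn_exp_mul_complex_Ioi (by simpa using hs) 0).bdd_mul
    hfm.aestronglyMeasurable (.of_forall hfC)

variable {G : ℂ → ℂ} (hfG : ∀ s : ℂ, 0 < s.re → ∫ x : ℝ, f x * Complex.exp (-s * x) = G s)
  {k : ℝ → ℂ} (hk : Continuous k) (hkc : HasCompactSupport k)

include hfG hk hkc

lemma integral_laplace_mul_fourierChar {δ : ℝ} (hδ : 0 < δ) (y : ℝ) :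
    ∫ t : ℝ, G (δ + 2 * Real.pi * t * Complex.I) * (𝐞 (t * y) • k t) =
      ∫ x : ℝ, f x * Complex.exp (-δ * x) * 𝓕 k (x - y) := by
  have hfint : Integrable fun x : ℝ ↦ f x * Complex.exp (-δ * x) :=
    integrable_mul_cexp_neg hfm hfC hf0 (s := δ) (by simpa using hδ)
  have hkint : Integrable fun t : ℝ ↦ 𝐞 (t * y) • k t :=
    Continuous.integrable_of_hasCompactSupport (by fun_prop) hkc.smul_left
  have hfourier (t : ℝ) : 𝓕 (fun x : ℝ ↦ f x * Complex.exp (-δ * x)) t =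
      G (δ + 2 * Real.pi * t * Complex.I) := by
    rw [Real.fourier_real_eq_integral_exp_smul, ← hfG _ (by simpa using hδ)]
    congr! 2 with x
    rw [smul_eq_mul, mul_left_comm, ← Complex.exp_add]
    congr 2
    push_cast
    ring
  have parseval := VectorFourier.integral_fourierIntegral_smul_eq_flip (L := innerₗ ℝ)
    (μ := volume) (ν := volume) (e := 𝐞) Real.continuous_fourierChar continuous_inner hfint hkint
  rw [flip_innerₗ] at parseval
  change ∫ t : ℝ, 𝓕 (fun x : ℝ ↦ f x * Complex.exp (-δ * x)) t • (𝐞 (t * y) • k t) =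
    ∫ x : ℝ, (f x * Complex.exp (-δ * x)) • 𝓕 (fun t : ℝ ↦ 𝐞 (t * y) • k t) x at parseval
  simpa only [hfourier, fourier_fourierChar_smul, smul_eq_mul] using parseval

variable (hG : ContinuousOn G {s | 0 ≤ s.re}) (hkF : Integrable (𝓕 k))

include hG hkF

lemma integral_laplace_boundary_mul_fourierChar (y : ℝ) :
    ∫ t : ℝ, G (2 * Real.pi * t * Complex.I) * (𝐞 (t * y) • k t) =
      ∫ x : ℝ, f x * 𝓕 k (x - y) := by
  have hright : Tendsto (fun δ : ℝ ↦ ∫ x : ℝ, f x * Complex.exp (-δ * x) * 𝓕 k (x - y))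
      (𝓝[>] 0) (𝓝 (∫ x : ℝ, f x * 𝓕 k (x - y))) := by
    have hkFy : Integrable fun x ↦ 𝓕 k (x - y) := hkF.comp_sub_right y
    apply tendsto_integral_filter_of_dominated_convergence (fun x ↦ C * ‖𝓕 k (x - y)‖)
    · refine .of_forall fun δ ↦ .mul ?_ hkFy.aestronglyMeasurable
      exact Measurable.aestronglyMeasurable (by fun_prop)
    · filter_upwards [self_mem_nhdsWithin] with δ hδ
      refine .of_forall fun x ↦ ?_
      rw [norm_mul]
      gcongr
      exact norm_mul_cexp_neg_le hfC hf0 (le_of_lt hδ) x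
    · exact hkFy.norm.const_mul C
    · refine .of_forall fun x ↦ .mul_const _ ?_
      have hcont : Continuous fun δ : ℝ ↦ f x * Complex.exp (-δ * x) := by fun_prop
      simpa using (hcont.tendsto 0).mono_left nhdsWithin_le_nhds
  have hleft : Tendsto
      (fun δ : ℝ ↦ ∫ t : ℝ, G (δ + 2 * Real.pi * t * Complex.I) * (𝐞 (t * y) • k t))
      (𝓝[>] 0) (𝓝 (∫ t : ℝ, G (2 * Real.pi * t * Complex.I) * (𝐞 (t * y) • k t))) := by
    have hcont : ContinuousOn
        (fun δ : ℝ ↦ ∫ t : ℝ, G (δ + 2 * Real.pi * t * Complex.I) * (𝐞 (t * y) • k t))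
        (Set.Ici 0) := by
      refine continuousOn_integral_of_compact_support hkc.isCompact ?_
        fun δ t _ ht ↦ by simp [image_eq_zero_of_notMem_tsupport ht]
      refine ContinuousOn.mul (hG.comp (by fun_prop) fun p hp ↦ ?_) (by fun_prop)
      simpa using hp.1
    simpa using (hcont 0 Set.self_mem_Ici).tendsto.mono_left
      (nhdsWithin_mono _ Set.Ioi_subset_Ici_self)
  refine tendsto_nhds_unique hleft (hright.congr' ?_)
  filter_upwards [self_mem_nhdsWithin] with δ hδ
  exact (integral_laplace_mul_fourierChar hfm hfC hf0 hfG hk hkc hδ y).symm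

lemma tendsto_integral_mul_fourier_sub_atTop_zero :
    Tendsto (fun y : ℝ ↦ ∫ x : ℝ, f x * 𝓕 k (x - y)) atTop (𝓝 0) := by
  have riemannLebesgue := (Real.tendsto_integral_exp_smul_cocompact
    (fun t : ℝ ↦ G (2 * Real.pi * t * Complex.I) * k t)).comp
      (tendsto_neg_atTop_atBot.mono_right atBot_le_cocompact)
  refine riemannLebesgue.congr fun y ↦ ?_
  rw [← integral_laplace_boundary_mul_fourierChar hfm hfC hf0 hfG hk hkc hG hkF y]
  simp [mul_smul_comm]

end BoundaryValues

open FourierTransform ComplexConjugate in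
lemma fourier_ofReal_eq_re_of_even {f : ℝ → ℝ} (hf : f.Even) (ξ : ℝ) :
    𝓕 (fun x ↦ (f x : ℂ)) ξ = ((𝓕 (fun x ↦ (f x : ℂ)) ξ).re : ℂ) := by
  symm
  rw [← Complex.conj_eq_iff_re, Real.fourier_real_eq_integral_exp_smul, ← integral_conj,
    ← integral_neg_eq_self]
  simp [hf.eq, map_ofNat, ← Complex.exp_conj]

open FourierTransform Convolution ContDiff in
lemma exists_fourier_eq_ofReal_nonneg : ∃ (k : ℝ → ℂ) (K : ℝ → ℝ), Continuous k ∧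
    HasCompactSupport k ∧ (∀ ξ, 𝓕 k ξ = K ξ) ∧ (∀ ξ, 0 ≤ K ξ) ∧ Integrable K ∧ 0 < ∫ ξ, K ξ := by
  -- `K` is the square of the real Fourier transform of an even bump `η`, and `k = η ⋆ η`.
  let b : ContDiffBump (0 : ℝ) := ⟨1, 2, one_pos, one_lt_two⟩
  let η : ℝ → ℂ := fun x ↦ b x
  have hηc : HasCompactSupport η := b.hasCompactSupport.comp_left Complex.ofReal_zero
  have hη : ContDiff ℝ ∞ η := Complex.ofRealCLM.contDiff.comp b.contDiff
  have hηi : Integrable η := hη.continuous.integrable_of_hasCompactSupport hηc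
  let S : SchwartzMap ℝ ℂ := 𝓕 (hηc.toSchwartzMap hη)
  have hS (ξ : ℝ) : S ξ = 𝓕 η ξ := rfl
  have hS_re (ξ : ℝ) : S ξ = ((S ξ).re : ℂ) := fourier_ofReal_eq_re_of_even (fun x ↦ b.neg x) ξ
  have hS_zero : (S 0).re = ∫ x, b x := by
    rw [hS, Real.fourier_real_eq_integral_exp_smul, ← Complex.ofReal_inj, ← integral_complex_ofReal]
    simp [η, integral_complex_ofReal]
  have hK : Integrable fun ξ ↦ (S ξ).re ^ 2 := (S.memLp 2).re.integrable_sq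
  refine ⟨η ⋆[ContinuousLinearMap.mul ℂ ℂ] η, fun ξ ↦ (S ξ).re ^ 2,
    hηc.continuous_convolution_right _ hηi.locallyIntegrable hη.continuous,
    hηc.convolution _ hηc, fun ξ ↦ ?_, fun ξ ↦ sq_nonneg _, hK, ?_⟩
  · rw [Real.fourier_mul_convolution_eq hηi hηi, Complex.ofReal_pow, ← hS_re, hS, sq]
  · rw [integral_pos_iff_support_of_nonneg (fun ξ ↦ sq_nonneg _) hK]
    have hcont : Continuous fun ξ ↦ (S ξ).re ^ 2 := by fun_prop
    refine hcont.isOpen_support.measure_pos volume ⟨0, ?_⟩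
    simpa [hS_zero] using b.integral_pos.ne'

/-! ### The Ingham–Karamata theorem -/

section Tauberian

variable {f : ℝ → ℝ} {C : ℝ} (hfm : Measurable f) (hfC : ∀ x, |f x| ≤ C)

open FourierTransform in
include hfm hfC in
lemma tendsto_integral_comp_add_div_mul_fourier (hf0 : ∀ x ≤ 0, f x = 0) {G : ℂ → ℂ}
    (hfG : ∀ s : ℂ, 0 < s.re → ∫ x : ℝ, f x * Complex.exp (-s * x) = G s)
    (hG : ContinuousOn G {s | 0 ≤ s.re}) {k : ℝ → ℂ} {K : ℝ → ℝ} (hk : Continuous k)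
    (hkc : HasCompactSupport k) (hkK : ∀ ξ, 𝓕 k ξ = K ξ) (hK : Integrable K) {l : ℝ}
    (hl : 0 < l) : Tendsto (fun y ↦ ∫ u, f (y + u / l) * K u) atTop (𝓝 0) := by
  have hscale : 𝓕 (fun t ↦ k (t / l)) = fun ξ ↦ ((l * K (l * ξ) : ℝ) : ℂ) := by
    ext ξ
    simp [fourier_comp_div k hl, hkK]
  have hlim := tendsto_integral_mul_fourier_sub_atTop_zero (f := fun x ↦ (f x : ℂ)) (by fun_prop)
    (fun x ↦ by simpa using hfC x) (fun x hx ↦ by simp [hf0 x hx]) hfG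
    (k := fun t ↦ k (t / l)) (by fun_prop)
    (hkc.comp_homeomorph (Homeomorph.mulRight₀ l⁻¹ (inv_ne_zero hl.ne'))) hG
    (hscale ▸ ((hK.comp_mul_left' hl.ne').const_mul l).ofReal)
  simp only [hscale, ← Complex.ofReal_mul, integral_complex_ofReal] at hlim
  refine (tendsto_ofReal_iff.mp hlim).congr fun y ↦ ?_
  calc ∫ x, f x * (l * K (l * (x - y)))
      = ∫ x, f (x + y) * (l * K (l * (x + y - y))) := (integral_add_right_eq_self _ y).symm
    _ = l * ∫ x, f (y + l * x / l) * K (l * x) := by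
        rw [← integral_const_mul]
        congr! 2
        rw [mul_div_cancel_left₀ _ hl.ne', add_sub_cancel_right, add_comm y]
        ring
    _ = ∫ u, f (y + u / l) * K u := by
        rw [Measure.integral_comp_mul_left (fun u ↦ f (y + u / l) * K u) l,
          abs_of_pos (inv_pos.mpr hl), smul_eq_mul, mul_inv_cancel_left₀ hl.ne']

lemma exists_integral_compl_Icc_lt {K : ℝ → ℝ} (hK : Integrable K) {η : ℝ} (hη : 0 < η) :
    ∃ R > 0, ∫ u in (Set.Icc (-R) R)ᶜ, K u < η := by
  have hlim : Tendsto (fun R : ℝ ↦ ∫ u in (Set.Icc (-R) R)ᶜ, K u) atTop (𝓝 0) := by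
    have hcover := aecover_Icc (μ := volume) tendsto_neg_atTop_atBot (tendsto_id (α := ℝ))
    have hdiff := (hcover.integral_tendsto_of_countably_generated hK).const_sub (∫ u, K u)
    rw [sub_self] at hdiff
    exact hdiff.congr fun R ↦
      sub_eq_iff_eq_add'.mpr (integral_add_compl measurableSet_Icc hK).symm
  obtain ⟨R, hR, hRpos⟩ := ((hlim.eventually_lt_const hη).and (eventually_gt_atTop 0)).exists
  exact ⟨R, hRpos, hR⟩

variable {K : ℝ → ℝ} (hK0 : ∀ u, 0 ≤ K u) (hK : Integrable K)

include hfm hfC hK0 hK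

-- The rescaled kernel has its bulk on an interval where `f ≥ c`, and only its tail elsewhere.
lemma mul_integral_le_integral_comp_mul_add {y l R c : ℝ} (hl : 0 < l)
    (hfc : ∀ x ∈ Set.Icc (y - R / l) (y + R / l), c ≤ f x) :
    c * ∫ u, K u ≤ (∫ u, f (y + u / l) * K u) + (C + c) * ∫ u in (Set.Icc (-R) R)ᶜ, K u := by
  have hfK : Integrable fun u ↦ f (y + u / l) * K u :=
    hK.bdd_mul (Measurable.aestronglyMeasurable (by fun_prop)) (.of_forall fun u ↦ hfC _)
  rw [← integral_indicator measurableSet_Icc.compl, ← integral_const_mul, ← integral_const_mul,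
    ← integral_add hfK ((hK.indicator measurableSet_Icc.compl).const_mul _)]
  refine integral_mono (hK.const_mul c)
    (hfK.add ((hK.indicator measurableSet_Icc.compl).const_mul _)) fun u ↦ ?_
  by_cases hu : u ∈ Set.Icc (-R) R
  · have hmem : y + u / l ∈ Set.Icc (y - R / l) (y + R / l) := by
      rw [sub_eq_add_neg, ← neg_div]
      constructor <;> gcongr
      exacts [hu.1, hu.2]
    simpa [hu] using mul_le_mul_of_nonneg_right (hfc _ hmem) (hK0 u)
  · have hlower := (abs_le.mp (hfC (y + u / l))).1
    simpa [hu, ← add_mul] using mul_le_mul_of_nonneg_right (by linarith) (hK0 u)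

lemma eventually_le_of_forall_mem_Icc_le (hKpos : 0 < ∫ u, K u)
    (hlim : ∀ l > 0, Tendsto (fun y ↦ ∫ u, f (y + u / l) * K u) atTop (𝓝 0)) {ε δ : ℝ}
    (hε : 0 < ε) (hδ : 0 < δ) :
    ∀ᶠ y in atTop, ∀ c, (∀ x ∈ Set.Icc (y - δ) (y + δ), c ≤ f x) → c ≤ ε := by
  have hC : 0 ≤ C := (abs_nonneg _).trans (hfC 0)
  have hεK : 0 < ε * ∫ u, K u := mul_pos hε hKpos
  obtain ⟨R, hR, htail⟩ := exists_integral_compl_Icc_lt hK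
    (η := ε * (∫ u, K u) / (4 * (C + 1))) (by positivity)
  have hl : 0 < R / δ := div_pos hR hδ
  filter_upwards [(hlim _ hl).eventually_lt_const (half_pos hεK)] with y hy c hc
  have hcC : c ≤ C := (hc y (by simp [hδ.le])).trans ((le_abs_self _).trans (hfC y))
  have hRδ : R / (R / δ) = δ := by field_simp
  have hbound := mul_integral_le_integral_comp_mul_add hfm hfC hK0 hK hl (by rwa [hRδ])
  have htail_nonneg : 0 ≤ ∫ u in (Set.Icc (-R) R)ᶜ, K u :=
    setIntegral_nonneg measurableSet_Icc.compl fun u _ ↦ hK0 u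
  have htail' : (C + c) * ∫ u in (Set.Icc (-R) R)ᶜ, K u ≤ ε * (∫ u, K u) / 2 := calc
    _ ≤ 2 * (C + 1) * (ε * (∫ u, K u) / (4 * (C + 1))) :=
      mul_le_mul (by linarith) htail.le htail_nonneg (by positivity)
    _ = ε * (∫ u, K u) / 2 := by field_simp; norm_num
  exact le_of_mul_le_mul_right (by linarith) hKpos

end Tauberian

/-- A real function is slowly decreasing, in the sense of R. Schmidt, if its liminf decrease over
short intervals far out is small. This is the Tauberian condition of the Wiener–Ikehara theorem. -/
def SlowlyDecreasing (f : ℝ → ℝ) : Prop :=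
  ∀ ε > 0, ∃ δ > 0, ∀ᶠ x in atTop, ∀ y ∈ Set.Icc x (x + δ), f x - ε ≤ f y

lemma SlowlyDecreasing.tendsto_zero_of_tendsto_integral {f : ℝ → ℝ} {C : ℝ}
    (hf : SlowlyDecreasing f) (hfm : Measurable f) (hfC : ∀ x, |f x| ≤ C) {K : ℝ → ℝ}
    (hK0 : ∀ u, 0 ≤ K u) (hK : Integrable K) (hKpos : 0 < ∫ u, K u)
    (hlim : ∀ l > 0, Tendsto (fun y ↦ ∫ u, f (y + u / l) * K u) atTop (𝓝 0)) :
    Tendsto f atTop (𝓝 0) := by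
  have hlim_neg (l : ℝ) (hl : 0 < l) :
      Tendsto (fun y ↦ ∫ u, -f (y + u / l) * K u) atTop (𝓝 0) := by
    simpa [integral_neg] using (hlim l hl).neg
  rw [Metric.tendsto_nhds]
  intro ε hε
  obtain ⟨δ, hδ, hslow⟩ := hf (ε / 3) (by positivity)
  have hup := eventually_le_of_forall_mem_Icc_le hfm hfC hK0 hK hKpos hlim
    (ε := ε / 3) (by positivity) (half_pos hδ)
  have hdown := eventually_le_of_forall_mem_Icc_le hfm.neg (f := fun x ↦ -f x)
    (fun x ↦ (abs_neg (f x)).le.trans (hfC x)) hK0 hK hKpos hlim_neg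
    (ε := ε / 3) (by positivity) (half_pos hδ)
  have hshift (a : ℝ) : Tendsto (fun z : ℝ ↦ z + a) atTop atTop :=
    tendsto_atTop_add_const_right _ a tendsto_id
  filter_upwards [hslow, (hshift (-δ)).eventually (eventually_forall_ge_atTop.mpr hslow),
    (hshift (δ / 2)).eventually hup, (hshift (-(δ / 2))).eventually hdown]
    with z hz hzδ hzup hzdown
  have hupper : f z - ε / 3 ≤ ε / 3 := hzup _ fun x hx ↦
    hz x ⟨by linarith [hx.1], by linarith [hx.2]⟩
  have hlower : -(f z + ε / 3) ≤ ε / 3 := hzdown _ fun x hx ↦ by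
    linarith [hzδ x (by linarith [hx.1]) z ⟨by linarith [hx.2], by linarith [hx.1]⟩]
  rw [Real.dist_0_eq_abs, abs_lt]
  constructor <;> linarith

open FourierTransform in
/-- Ingham–Karamata theorem: the Tauberian core of the Wiener–Ikehara theorem. -/
theorem SlowlyDecreasing.tendsto_zero_of_laplace {f : ℝ → ℝ} {C : ℝ} {G : ℂ → ℂ}
    (hf : SlowlyDecreasing f) (hfm : Measurable f) (hfC : ∀ x, |f x| ≤ C)
    (hf0 : ∀ x ≤ 0, f x = 0)
    (hfG : ∀ s : ℂ, 0 < s.re → ∫ x : ℝ, f x * Complex.exp (-s * x) = G s)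
    (hG : ContinuousOn G {s | 0 ≤ s.re}) : Tendsto f atTop (𝓝 0) := by
  obtain ⟨k, K, hk, hkc, hkK, hK0, hK, hKpos⟩ := exists_fourier_eq_ofReal_nonneg
  exact hf.tendsto_zero_of_tendsto_integral hfm hfC hK0 hK hKpos fun l hl ↦
    tendsto_integral_comp_add_div_mul_fourier hfm hfC hf0 hfG hG hk hkc hkK hK hl

/-! ### The prime number theorem -/

lemma integral_Ioi_one_eq_integral_exp_smul_comp_exp {E : Type*} [NormedAddCommGroup E]
    [NormedSpace ℝ E] (g : ℝ → E) :
    ∫ t in Set.Ioi 1, g t = ∫ x in Set.Ioi 0, Real.exp x • g (Real.exp x) := by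
  rw [← Real.exp_zero, ← Real.image_exp_Ioi,
    integral_image_eq_integral_abs_deriv_smul measurableSet_Ioi
      (fun x _ ↦ (Real.hasDerivAt_exp x).hasDerivWithinAt) Real.exp_injective.injOn]
  simp only [Real.abs_exp]

/-- The mean value `(∑ k ≤ t, f k) / t` in the variable `x = log t`. -/
noncomputable def logMean (f : ℕ → ℝ) (x : ℝ) : ℝ :=
  (∑ k ∈ Finset.Icc 1 ⌊Real.exp x⌋₊, f k) * Real.exp (-x)

lemma logMean_log (f : ℕ → ℝ) {t : ℝ} (ht : 0 < t) :
    logMean f (Real.log t) = (∑ k ∈ Finset.Icc 1 ⌊t⌋₊, f k) / t := by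
  rw [logMean, Real.exp_neg, Real.exp_log ht, div_eq_mul_inv]

section WienerIkehara

variable {f : ℕ → ℝ} (hf : ∀ n, 0 ≤ f n)

include hf

lemma monotone_sum_Icc_one : Monotone fun n : ℕ ↦ ∑ k ∈ Finset.Icc 1 n, f k := fun _ _ hmn ↦
  Finset.sum_le_sum_of_subset_of_nonneg (Finset.Icc_subset_Icc_right hmn) fun k _ _ ↦ hf k

lemma logMean_nonneg (x : ℝ) : 0 ≤ logMean f x :=
  mul_nonneg (Finset.sum_nonneg fun k _ ↦ hf k) (Real.exp_pos _).le

lemma measurable_logMean : Measurable (logMean f) := by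
  have hmono : Monotone fun x : ℝ ↦ ∑ k ∈ Finset.Icc 1 ⌊Real.exp x⌋₊, f k :=
    (monotone_sum_Icc_one hf).comp (Nat.floor_mono.comp Real.exp_monotone)
  exact hmono.measurable.mul (by fun_prop)

lemma logMean_mul_exp_sub_le {x y : ℝ} (hxy : x ≤ y) :
    logMean f x * Real.exp (x - y) ≤ logMean f y := by
  have hexp : Real.exp (-x) * Real.exp (x - y) = Real.exp (-y) := by
    rw [← Real.exp_add]
    ring_nf
  rw [logMean, logMean, mul_assoc, hexp]
  exact mul_le_mul_of_nonneg_right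
    (monotone_sum_Icc_one hf (Nat.floor_mono (Real.exp_le_exp.mpr hxy))) (Real.exp_pos _).le

variable {C : ℝ} (hC : ∀ n : ℕ, ∑ k ∈ Finset.Icc 1 n, f k ≤ C * n)

include hC

lemma nonneg_of_sum_Icc_le_mul : 0 ≤ C := by
  simpa using (hf 1).trans (by simpa using hC 1)

lemma logMean_le (x : ℝ) : logMean f x ≤ C := by
  rw [logMean, Real.exp_neg, ← div_eq_mul_inv, div_le_iff₀ (Real.exp_pos x)]
  exact (hC _).trans (mul_le_mul_of_nonneg_left (Nat.floor_le (Real.exp_pos x).le)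
    (nonneg_of_sum_Icc_le_mul hf hC))

lemma slowlyDecreasing_logMean : SlowlyDecreasing (logMean f) := by
  intro ε hε
  have hC0 : 0 ≤ C := nonneg_of_sum_Icc_le_mul hf hC
  refine ⟨ε / (C + 1), by positivity, .of_forall fun x y hy ↦ ?_⟩
  have hdrop : logMean f x * (y - x) ≤ ε := calc
    logMean f x * (y - x) ≤ (C + 1) * (ε / (C + 1)) :=
      mul_le_mul ((logMean_le hf hC x).trans (by linarith)) (by linarith [hy.2])
        (by linarith [hy.1]) (by positivity)
    _ = ε := by field_simp
  calc logMean f x - ε ≤ logMean f x * (x - y + 1) := by linarith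
    _ ≤ logMean f x * Real.exp (x - y) :=
      mul_le_mul_of_nonneg_left (Real.add_one_le_exp _) (logMean_nonneg hf x)
    _ ≤ logMean f y := logMean_mul_exp_sub_le hf hy.1

lemma integral_logMean_mul_cexp {s : ℂ} (hs : 0 < s.re) :
    ∫ x in Set.Ioi (0 : ℝ), logMean f x * Complex.exp (-s * x) =
      LSeries (fun n ↦ f n) (s + 1) / (s + 1) := by
  have hO : (fun n : ℕ ↦ ∑ k ∈ Finset.Icc 1 n, f k) =O[atTop] fun n : ℕ ↦ (n : ℝ) ^ (1 : ℝ) := by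
    refine .of_bound C (.of_forall fun n ↦ ?_)
    rw [Real.norm_of_nonneg (Finset.sum_nonneg fun k _ ↦ hf k), Real.rpow_one, Real.norm_natCast]
    exact hC n
  have hs1 : s + 1 ≠ 0 := Complex.ne_zero_of_re_pos (by simpa using hs.trans (lt_add_one _))
  rw [LSeries_eq_mul_integral_of_nonneg f zero_le_one (by simpa using hs) hO hf,
    mul_div_cancel_left₀ _ hs1, integral_Ioi_one_eq_integral_exp_smul_comp_exp]
  refine setIntegral_congr_fun measurableSet_Ioi fun x _ ↦ ?_
  rw [Complex.cpow_def_of_ne_zero (by exact_mod_cast (Real.exp_pos x).ne'),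
    ← Complex.ofReal_log (Real.exp_pos x).le, Real.log_exp, Complex.real_smul, logMean]
  push_cast
  rw [mul_left_comm, mul_assoc, ← Complex.exp_add, ← Complex.exp_add]
  ring_nf

lemma integral_indicator_logMean_sub_mul_cexp (A : ℝ) {s : ℂ} (hs : 0 < s.re) :
    ∫ x, (((Set.Ioi (0 : ℝ)).indicator (fun x ↦ logMean f x - A) x : ℝ) : ℂ) *
      Complex.exp (-s * x) = LSeries (fun n ↦ f n) (s + 1) / (s + 1) - A / s := by
  have hexp : IntegrableOn (fun x : ℝ ↦ Complex.exp (-s * x)) (Set.Ioi 0) :=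
    integrableOn_exp_mul_complex_Ioi (by simpa using hs) 0
  have hmean : IntegrableOn (fun x : ℝ ↦ logMean f x * Complex.exp (-s * x)) (Set.Ioi 0) :=
    Integrable.bdd_mul (c := C) hexp (measurable_logMean hf).complex_ofReal.aestronglyMeasurable
      (.of_forall fun x ↦ by
        simpa [abs_of_nonneg (logMean_nonneg hf x)] using logMean_le hf hC x)
  calc _ = ∫ x in Set.Ioi (0 : ℝ),
        (logMean f x * Complex.exp (-s * x) - A * Complex.exp (-s * x)) := by
        rw [← integral_indicator measurableSet_Ioi]
        congr with x
        by_cases hx : x ∈ Set.Ioi 0 <;> simp [hx, sub_mul]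
    _ = _ := by
        rw [integral_sub hmean (hexp.const_mul _), integral_logMean_mul_cexp hf hC hs,
          integral_const_mul, integral_exp_mul_complex_Ioi (by simpa using hs)]
        simp [div_eq_mul_inv]

lemma tendsto_logMean {F : ℂ → ℂ} {A : ℝ} (hF : ContinuousOn F {s | 1 ≤ s.re})
    (hfF : ∀ s : ℂ, 1 < s.re → LSeries (fun n ↦ f n) s = F s + A / (s - 1)) :
    Tendsto (logMean f) atTop (𝓝 A) := by
  let g : ℝ → ℝ := (Set.Ioi 0).indicator fun x ↦ logMean f x - A
  have hgf : ∀ᶠ x in atTop, g x = logMean f x - A := by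
    filter_upwards [eventually_gt_atTop 0] with x hx using Set.indicator_of_mem hx _
  have hgm : Measurable g := ((measurable_logMean hf).sub_const A).indicator measurableSet_Ioi
  have hgC (x : ℝ) : |g x| ≤ C + |A| := by
    have hbound : |logMean f x - A| ≤ C + |A| := (abs_sub _ _).trans
      (by rw [abs_of_nonneg (logMean_nonneg hf x)]; gcongr; exact logMean_le hf hC x)
    exact (norm_indicator_le_norm_self (fun x ↦ logMean f x - A) x).trans hbound
  have hg0 (x : ℝ) (hx : x ≤ 0) : g x = 0 := Set.indicator_of_notMem (by simpa using hx) _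
  have hgslow : SlowlyDecreasing g := by
    intro ε hε
    obtain ⟨δ, hδ, hslow⟩ := slowlyDecreasing_logMean hf hC ε hε
    refine ⟨δ, hδ, ?_⟩
    filter_upwards [hslow, eventually_forall_ge_atTop.mpr hgf] with x hx hgx y hy
    rw [hgx x le_rfl, hgx y hy.1]
    linarith [hx y hy]
  have hs1 {s : ℂ} (hs : 0 ≤ s.re) : s + 1 ≠ 0 :=
    Complex.ne_zero_of_re_pos (by simpa using hs.trans_lt (lt_add_one _))
  have hG : ContinuousOn (fun s ↦ (F (s + 1) - A) / (s + 1)) {s | 0 ≤ s.re} :=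
    .div ((hF.comp (by fun_prop) fun s hs ↦ by simpa using hs).sub continuousOn_const)
      (by fun_prop) fun s hs ↦ hs1 hs
  have hgG (s : ℂ) (hs : 0 < s.re) :
      ∫ x : ℝ, (g x : ℂ) * Complex.exp (-s * x) = (F (s + 1) - A) / (s + 1) := by
    have hs0 : s ≠ 0 := Complex.ne_zero_of_re_pos hs
    rw [integral_indicator_logMean_sub_mul_cexp hf hC A hs, hfF _ (by simpa using hs),
      add_sub_cancel_right]
    field_simp [hs1 hs.le]
    ring
  have hg : Tendsto g atTop (𝓝 0) := hgslow.tendsto_zero_of_laplace hgm hgC hg0 hgG hG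
  simpa using (hg.congr' hgf).add_const A

theorem wiener_ikehara {F : ℂ → ℂ} {A : ℝ} (hF : ContinuousOn F {s | 1 ≤ s.re})
    (hfF : ∀ s : ℂ, 1 < s.re → LSeries (fun n ↦ f n) s = F s + A / (s - 1)) :
    Tendsto (fun x : ℝ ↦ (∑ k ∈ Finset.Icc 1 ⌊x⌋₊, f k) / x) atTop (𝓝 A) := by
  refine ((tendsto_logMean hf hC hF hfF).comp Real.tendsto_log_atTop).congr' ?_
  filter_upwards [eventually_gt_atTop 0] with x hx using logMean_log f hx

end WienerIkehara

lemma tendsto_psi_div_atTop : Tendsto (fun x ↦ Chebyshev.psi x / x) atTop (𝓝 1) := by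
  refine wiener_ikehara (fun _ ↦ ArithmeticFunction.vonMangoldt_nonneg) (C := Real.log 4 + 4)
    (fun n ↦ ?_)
    (ArithmeticFunction.vonMangoldt.continuousOn_LFunctionResidueClassAux (q := 1) 1) fun s hs ↦ ?_
  · simpa [Chebyshev.psi, ← Finset.Icc_add_one_left_eq_Ioc] using
      Chebyshev.psi_le_const_mul_self n.cast_nonneg
  · have hres : ArithmeticFunction.vonMangoldt.residueClass (1 : ZMod 1) =
        fun n ↦ ArithmeticFunction.vonMangoldt n := by
      ext n
      simp [ArithmeticFunction.vonMangoldt.residueClass, Subsingleton.elim _ (1 : ZMod 1)]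
    rw [ArithmeticFunction.vonMangoldt.eqOn_LFunctionResidueClassAux isUnit_one hs, hres]
    simp

lemma tendsto_theta_div_atTop : Tendsto (fun x ↦ Chebyshev.theta x / x) atTop (𝓝 1) := by
  have hsqrt : Real.sqrt =o[atTop] fun x : ℝ ↦ x := by
    refine isLittleO_of_tendsto (fun x hx ↦ by simp [hx]) ?_
    simp only [Real.sqrt_div_self]
    exact tendsto_inv_atTop_zero.comp Real.tendsto_sqrt_atTop
  have hdiff := (Chebyshev.isBigO_psi_sub_theta_sqrt.trans_isLittleO hsqrt).tendsto_div_nhds_zero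
  simpa [sub_div] using tendsto_psi_div_atTop.sub hdiff

theorem primeCounting_isEquivalent :
    (fun n : ℕ ↦ (n.primeCounting : ℝ)) ~[atTop] fun n : ℕ ↦ (n : ℝ) / Real.log n := by
  have htheta : (fun x ↦ Chebyshev.theta x / Real.log x) ~[atTop] fun x ↦ x / Real.log x :=
    (isEquivalent_of_tendsto_one tendsto_theta_div_atTop).div .refl
  have hpi : (fun x ↦ (Nat.primeCounting ⌊x⌋₊ : ℝ)) ~[atTop] fun x ↦ x / Real.log x := by
    refine (htheta.add_isLittleO Chebyshev.integral_theta_div_log_sq_isLittleO).congr_left ?_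
    filter_upwards [eventually_ge_atTop 2] with x hx
    exact (Chebyshev.primeCounting_eq_theta_div_log_add_integral hx).symm
  simpa [Function.comp_def] using hpi.comp_tendsto tendsto_natCast_atTop_atTop

/-! ### Regularly varying sequences -/

/-- Regular variation with index `α`, for a sequence indexed by `ℕ`: its values at the integer
parts `⌊t * n⌋₊` are compared with its value at `n`, for each real `t > 0`. -/
def RegularlyVarying (N : ℕ → ℝ) (α : ℝ) : Prop :=
  ∀ t : ℝ, 0 < t → Tendsto (fun n : ℕ ↦ N ⌊t * n⌋₊ / N n) atTop (𝓝 (t ^ α))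

lemma tendsto_floor_mul_natCast_atTop {t : ℝ} (ht : 0 < t) :
    Tendsto (fun n : ℕ ↦ ⌊t * n⌋₊) atTop atTop :=
  (tendsto_nat_floor_mul_atTop t ht).comp tendsto_natCast_atTop_atTop

lemma regularlyVarying_natCast : RegularlyVarying (fun n ↦ n) 1 := fun t ht ↦ by
  simpa [Function.comp_def] using
    (tendsto_nat_floor_mul_div_atTop ht.le).comp (tendsto_natCast_atTop_atTop (R := ℝ))

lemma regularlyVarying_log_natCast : RegularlyVarying (fun n ↦ Real.log n) 0 := by
  intro t ht
  have hfloor : Tendsto (fun n : ℕ ↦ (⌊t * n⌋₊ / n : ℝ)) atTop (𝓝 t) := by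
    simpa using regularlyVarying_natCast t ht
  have hlog := (hfloor.log ht.ne').div_atTop
    (Real.tendsto_log_atTop.comp tendsto_natCast_atTop_atTop)
  rw [Real.rpow_zero, ← zero_add 1]
  refine (hlog.add_const 1).congr' ?_
  filter_upwards [eventually_gt_atTop 1,
    (tendsto_floor_mul_natCast_atTop ht).eventually_gt_atTop 0] with n hn htn
  have hlogn : Real.log n ≠ 0 := (Real.log_pos (by exact_mod_cast hn)).ne'
  rw [Function.comp_apply, Real.log_div (by positivity) (by positivity)]
  field_simp
  ring

namespace RegularlyVarying

variable {N M : ℕ → ℝ} {α β : ℝ}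

lemma congr_isEquivalent (hN : RegularlyVarying N α) (hNM : N ~[atTop] M) :
    RegularlyVarying M α := fun t ht ↦
  ((hNM.comp_tendsto (tendsto_floor_mul_natCast_atTop ht)).div hNM).tendsto_nhds (hN t ht)

lemma mul (hN : RegularlyVarying N α) (hM : RegularlyVarying M β) :
    RegularlyVarying (N * M) (α + β) := fun t ht ↦ by
  simpa [Real.rpow_add ht, mul_div_mul_comm] using (hN t ht).mul (hM t ht)

lemma div (hN : RegularlyVarying N α) (hM : RegularlyVarying M β) :
    RegularlyVarying (N / M) (α - β) := fun t ht ↦ by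
  simpa [Real.rpow_sub ht, div_div_div_comm, Pi.div_def] using
    (hN t ht).div (hM t ht) (Real.rpow_pos_of_pos ht β).ne'

lemma eventually_ne_zero (hN : RegularlyVarying N α) : ∀ᶠ n in atTop, N n ≠ 0 := by
  have h := hN 1 one_pos
  rw [Real.one_rpow] at h
  filter_upwards [h.eventually_ne one_ne_zero] with n hn hNn using hn (by simp [hNn])

lemma eventually_pos (hN : RegularlyVarying N α) (hN0 : ∀ n, 0 ≤ N n) :
    ∀ᶠ n in atTop, 0 < N n :=
  hN.eventually_ne_zero.mono fun n hn ↦ (hN0 n).lt_of_ne' hn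

end RegularlyVarying

/-- The summatory function of a sequence, which determines its moments by Abel summation. -/
def summatory (w : ℕ → ℝ) (n : ℕ) : ℝ := ∑ k ∈ Finset.Icc 0 n, w k

lemma sum_pow_mul_eq_sub_integral_summatory (w : ℕ → ℝ) (d n : ℕ) :
    ∑ k ∈ Finset.Icc 0 n, (k : ℝ) ^ d * w k =
      (n : ℝ) ^ d *
        (summatory w n - ∫ s in (0 : ℝ)..1, d * s ^ (d - 1) * summatory w ⌊s * n⌋₊) := by
  have habel := sum_mul_eq_sub_integral_mul' w (f := fun t : ℝ ↦ t ^ d) n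
    (fun t _ ↦ by fun_prop) (by simpa using Continuous.integrableOn_Icc (by fun_prop))
  have hscale := intervalIntegral.mul_integral_comp_mul_right (a := 0) (b := 1)
    (f := fun t : ℝ ↦ d * t ^ (d - 1) * summatory w ⌊t⌋₊) n
  rw [zero_mul, one_mul] at hscale
  simp only [deriv_pow_field] at habel
  rw [habel, ← intervalIntegral.integral_of_le n.cast_nonneg]
  change _ - ∫ t in (0 : ℝ)..n, d * t ^ (d - 1) * summatory w ⌊t⌋₊ = _
  rw [← hscale, mul_sub, ← intervalIntegral.integral_const_mul,
    ← intervalIntegral.integral_const_mul]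
  refine congrArg _ (intervalIntegral.integral_congr fun s _ ↦ ?_)
  rcases d with - | d
  · simp
  · simp only [Nat.add_sub_cancel, mul_pow]
    ring

lemma integral_mul_pow_mul_rpow (d : ℕ) {α : ℝ} (hα : 0 < α) :
    ∫ s in (0 : ℝ)..1, d * s ^ (d - 1) * s ^ α = d / (α + d) := by
  rcases d with - | d
  · simp
  calc ∫ s in (0 : ℝ)..1, ((d + 1 : ℕ) : ℝ) * s ^ d * s ^ α
      = ∫ s in (0 : ℝ)..1, ((d + 1 : ℕ) : ℝ) * s ^ (d + α) := by
        refine intervalIntegral.integral_congr_ae (.of_forall fun s hs ↦ ?_)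
        rw [Set.uIoc_of_le zero_le_one] at hs
        rw [mul_assoc, Real.rpow_add hs.1, Real.rpow_natCast]
    _ = (d + 1 : ℕ) / (α + (d + 1 : ℕ)) := by
        have hpos : 0 < d + α + 1 := by positivity
        rw [intervalIntegral.integral_const_mul, integral_rpow (.inl (by linarith)),
          Real.one_rpow, Real.zero_rpow hpos.ne']
        push_cast
        ring_nf

section Moments

variable {w : ℕ → ℝ} (hw : ∀ k, 0 ≤ w k)

include hw

lemma summatory_nonneg (n : ℕ) : 0 ≤ summatory w n := Finset.sum_nonneg fun k _ ↦ hw k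

lemma monotone_summatory : Monotone (summatory w) := fun _ _ hmn ↦
  Finset.sum_le_sum_of_subset_of_nonneg (Finset.Icc_subset_Icc_right hmn) fun k _ _ ↦ hw k

lemma tendsto_integral_summatory_div {α : ℝ} (hN : RegularlyVarying (summatory w) α) (d : ℕ) :
    Tendsto
      (fun n : ℕ ↦ ∫ s in (0 : ℝ)..1, d * s ^ (d - 1) * (summatory w ⌊s * n⌋₊ / summatory w n))
      atTop (𝓝 (∫ s in (0 : ℝ)..1, d * s ^ (d - 1) * s ^ α)) := by
  refine intervalIntegral.tendsto_integral_filter_of_dominated_convergence (fun _ ↦ d) ?_ ?_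
    intervalIntegrable_const ?_
  · refine .of_forall fun n ↦ Measurable.aestronglyMeasurable ?_
    have hmeas : Measurable fun s : ℝ ↦ summatory w ⌊s * n⌋₊ :=
      (measurable_from_nat (f := summatory w)).comp
        (Nat.measurable_floor.comp (measurable_id.mul_const (n : ℝ)))
    fun_prop
  · refine .of_forall fun n ↦ .of_forall fun s hs ↦ ?_
    rw [Set.uIoc_of_le zero_le_one] at hs
    have hratio : summatory w ⌊s * n⌋₊ / summatory w n ≤ 1 :=
      div_le_one_of_le₀ (monotone_summatory hw (Nat.floor_le_of_le
        (mul_le_of_le_one_left n.cast_nonneg hs.2))) (summatory_nonneg hw n)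
    have hratio_nonneg : 0 ≤ summatory w ⌊s * n⌋₊ / summatory w n :=
      div_nonneg (summatory_nonneg hw _) (summatory_nonneg hw n)
    rw [Real.norm_of_nonneg (mul_nonneg (by positivity [hs.1]) hratio_nonneg)]
    exact mul_le_of_le_one_right (by positivity [hs.1]) hratio |>.trans
      (mul_le_of_le_one_right d.cast_nonneg (pow_le_one₀ hs.1.le hs.2))
  · refine .of_forall fun s hs ↦ ?_
    rw [Set.uIoc_of_le zero_le_one] at hs
    exact (hN s hs.1).const_mul _

theorem tendsto_sum_pow_mul_div_summatory {α : ℝ} (hα : 0 < α)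
    (hN : RegularlyVarying (summatory w) α) (d : ℕ) :
    Tendsto (fun n : ℕ ↦ (∑ k ∈ Finset.Icc 0 n, (k : ℝ) ^ d * w k) / ((n : ℝ) ^ d * summatory w n))
      atTop (𝓝 (α / (α + d))) := by
  have hlim := (tendsto_integral_summatory_div hw hN d).const_sub 1
  rw [integral_mul_pow_mul_rpow d hα, one_sub_div (by positivity), add_sub_cancel_right] at hlim
  refine hlim.congr' ?_
  filter_upwards [eventually_ne_atTop 0, hN.eventually_ne_zero] with n hn hNn
  rw [sum_pow_mul_eq_sub_integral_summatory, mul_div_mul_left _ _ (by positivity), sub_div,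
    div_self hNn, ← intervalIntegral.integral_div]
  simp only [mul_div_assoc]

end Moments

-- Pólya's theorem: between two nearby points, monotonicity traps `F i` near `f`.
theorem tendstoUniformlyOn_Icc_of_monotoneOn {ι : Type*} {l : Filter ι} {F : ι → ℝ → ℝ}
    {f : ℝ → ℝ} {a b : ℝ} (hF : ∀ i, MonotoneOn (F i) (Set.Icc a b))
    (hf : ContinuousOn f (Set.Icc a b))
    (hlim : ∀ x ∈ Set.Icc a b, Tendsto (F · x) l (𝓝 (f x))) :
    TendstoUniformlyOn F f l (Set.Icc a b) := by
  rw [← tendstoLocallyUniformlyOn_iff_tendstoUniformlyOn_of_compact isCompact_Icc,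
    Metric.tendstoLocallyUniformlyOn_iff]
  intro ε hε x hx
  obtain ⟨δ, hδ, hclose⟩ := Metric.continuousOn_iff.mp hf x hx (ε / 3) (by positivity)
  have hlo : max a (x - δ / 2) ∈ Set.Icc a b := by grind
  have hhi : min b (x + δ / 2) ∈ Set.Icc a b := by grind
  have hflo := hclose _ hlo (by grind [Real.dist_eq])
  have hfhi := hclose _ hhi (by grind [Real.dist_eq])
  refine ⟨Set.Icc a b ∩ Metric.ball x (δ / 2),
    inter_mem_nhdsWithin _ (Metric.ball_mem_nhds x (by positivity)), ?_⟩
  filter_upwards [(hlim _ hlo).eventually (Metric.ball_mem_nhds _ (by positivity : 0 < ε / 3)),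
    (hlim _ hhi).eventually (Metric.ball_mem_nhds _ (by positivity : 0 < ε / 3))] with i hilo hihi
  rintro y ⟨hy, hyx⟩
  have hfy := hclose y hy (by grind [Metric.mem_ball])
  rw [Metric.mem_ball] at hyx
  simp only [Real.dist_eq, abs_lt] at hyx hilo hihi hflo hfhi hfy ⊢
  have hFlo := hF i hlo hy (by grind)
  have hFhi := hF i hy hhi (by grind)
  constructor <;> linarith

section Uniform

variable {N : ℕ → ℝ} {α : ℝ} (hN : RegularlyVarying N α) (hα : 0 < α) (hN0 : ∀ n, 0 ≤ N n)
  (hmono : Monotone N)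

include hN hα hN0 hmono

lemma RegularlyVarying.tendsto_const_div : Tendsto (fun n ↦ N 0 / N n) atTop (𝓝 0) := by
  have hsmall : Tendsto (fun t : ℝ ↦ t ^ α) (𝓝[>] 0) (𝓝 0) := by
    simpa [Real.zero_rpow hα.ne'] using
      (Real.continuousAt_rpow_const 0 α (.inr hα.le)).tendsto.mono_left nhdsWithin_le_nhds
  refine tendsto_order.mpr ⟨fun a ha ↦ .of_forall fun n ↦ ha.trans_le (div_nonneg (hN0 0) (hN0 n)),
    fun a ha ↦ ?_⟩
  obtain ⟨t, hta, ht⟩ := ((hsmall.eventually_lt_const ha).and self_mem_nhdsWithin).exists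
  filter_upwards [(hN t ht).eventually_lt_const hta] with n hn
  exact (div_le_div_of_nonneg_right (hmono (Nat.zero_le _)) (hN0 n)).trans_lt hn

theorem RegularlyVarying.tendstoUniformlyOn :
    TendstoUniformlyOn (fun (n : ℕ) (t : ℝ) ↦ N ⌊t * n⌋₊ / N n) (fun t ↦ t ^ α) atTop
      (Set.Icc 0 1) := by
  refine tendstoUniformlyOn_Icc_of_monotoneOn (fun n s _ t _ hst ↦ ?_)
    (Real.continuous_rpow_const hα.le).continuousOn fun t ht ↦ ?_
  · exact div_le_div_of_nonneg_right
      (hmono (Nat.floor_mono (mul_le_mul_of_nonneg_right hst n.cast_nonneg))) (hN0 n)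
  · rcases ht.1.eq_or_lt with rfl | htpos
    · simpa [Real.zero_rpow hα.ne'] using hN.tendsto_const_div hα hN0 hmono
    · exact hN t htpos

end Uniform

section Convolution

variable {a b : ℕ → ℝ} {α : ℝ} (ha : ∀ k, 0 ≤ a k) (hb : ∀ k, 0 ≤ b k)
  (hA : RegularlyVarying (summatory a) α) (hB : RegularlyVarying (summatory b) 1)

include ha

include hb hB in
lemma eventually_abs_sum_mul_summatory_sub_le {ε : ℝ} (hε : 0 < ε) : ∀ᶠ n : ℕ in atTop,
    |∑ p ∈ Finset.Icc 0 n, a p * (summatory b (n - p) / summatory b n - (1 - p / n))| ≤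
      ε * summatory a n := by
  have huniform := Metric.tendstoUniformlyOn_iff.mp (hB.tendstoUniformlyOn one_pos
    (summatory_nonneg hb) (monotone_summatory hb)) ε hε
  filter_upwards [huniform, eventually_ne_atTop 0] with n hn hn0
  have hn0' : (0 : ℝ) < n := by positivity
  rw [show summatory a n = ∑ p ∈ Finset.Icc 0 n, a p from rfl, mul_comm, Finset.sum_mul]
  refine (Finset.abs_sum_le_sum_abs _ _).trans (Finset.sum_le_sum fun p hp ↦ ?_)
  rw [abs_mul, abs_of_nonneg (ha p)]
  refine mul_le_mul_of_nonneg_left ?_ (ha p)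
  have hpn : (p : ℝ) ≤ n := by exact_mod_cast (Finset.mem_Icc.mp hp).2
  have hfloor : ⌊(1 - p / n : ℝ) * n⌋₊ = n - p := by
    rw [sub_mul, div_mul_cancel₀ _ hn0'.ne', one_mul, ← Nat.cast_sub (Finset.mem_Icc.mp hp).2,
      Nat.floor_natCast]
  have := hn (1 - p / n) ⟨sub_nonneg.mpr (div_le_one_of_le₀ hpn n.cast_nonneg),
    sub_le_self _ (by positivity)⟩
  rw [hfloor, Real.rpow_one, dist_comm, Real.dist_eq] at this
  exact this.le

include hb hA hB in
theorem tendsto_sum_mul_summatory_div (hα : 0 < α) :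
    Tendsto (fun n ↦ (∑ p ∈ Finset.Icc 0 n, a p * summatory b (n - p)) /
      (summatory a n * summatory b n)) atTop (𝓝 (1 / (α + 1))) := by
  have hmoment := (tendsto_sum_pow_mul_div_summatory ha hα hA 1).const_sub 1
  have herror : Tendsto (fun n : ℕ ↦ (∑ p ∈ Finset.Icc 0 n,
      a p * (summatory b (n - p) / summatory b n - (1 - p / n))) / summatory a n)
      atTop (𝓝 0) := by
    refine Metric.tendsto_nhds.mpr fun ε hε ↦ ?_
    filter_upwards [eventually_abs_sum_mul_summatory_sub_le ha hb hB (half_pos hε),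
      hA.eventually_pos (summatory_nonneg ha)] with n hn hAn
    rw [dist_zero_right, Real.norm_eq_abs, abs_div, abs_of_pos hAn, div_lt_iff₀ hAn]
    exact hn.trans_lt (mul_lt_mul_of_pos_right (half_lt_self hε) hAn)
  have hlim := herror.add hmoment
  rw [zero_add, Nat.cast_one, one_sub_div (by positivity), add_sub_cancel_left] at hlim
  refine hlim.congr' ?_
  filter_upwards [eventually_ne_atTop 0, hA.eventually_ne_zero, hB.eventually_ne_zero]
    with n hn hAn hBn
  have hn' : (n : ℝ) ≠ 0 := by exact_mod_cast hn
  have hsum : ∑ p ∈ Finset.Icc 0 n, a p * (summatory b (n - p) / summatory b n - (1 - p / n)) =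
      (∑ p ∈ Finset.Icc 0 n, a p * summatory b (n - p)) / summatory b n -
        (summatory a n - (∑ p ∈ Finset.Icc 0 n, (p : ℝ) ^ 1 * a p) / n) := by
    simp only [show summatory a n = ∑ p ∈ Finset.Icc 0 n, a p from rfl, Finset.sum_div,
      ← Finset.sum_sub_distrib]
    exact Finset.sum_congr rfl fun p _ ↦ by ring
  rw [hsum]
  field_simp
  ring

end Convolution

/-! ### Counting Goldbach partitions -/

/-- The indicator function of the odd primes. -/
noncomputable def oddPrimeIndicator : ℕ → ℝ := Set.indicator {p | p.Prime ∧ Odd p} 1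

lemma oddPrimeIndicator_nonneg (p : ℕ) : 0 ≤ oddPrimeIndicator p :=
  Set.indicator_nonneg (fun _ _ ↦ zero_le_one) p

lemma summatory_oddPrimeIndicator_add_one {n : ℕ} (hn : 2 ≤ n) :
    summatory oddPrimeIndicator n + 1 = n.primeCounting := by
  have htwo : ∑ p ∈ Finset.Icc 0 n, (if p = 2 then 1 else 0 : ℝ) = 1 := by simp [hn]
  rw [summatory, ← htwo, ← Finset.sum_add_distrib, Nat.primeCounting, Nat.primeCounting',
    Nat.count_eq_card_filter_range, Nat.range_succ_eq_Icc_zero, Finset.natCast_card_filter]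
  refine Finset.sum_congr rfl fun p _ ↦ ?_
  rcases eq_or_ne p 2 with rfl | hp
  · simp [oddPrimeIndicator, Nat.prime_two]
  · have hodd : p.Prime ∧ Odd p ↔ p.Prime := and_iff_left_of_imp fun h ↦ h.odd_of_ne_two hp
    simp [oddPrimeIndicator, Set.indicator_apply, hodd, hp]

lemma tendsto_summatory_oddPrimeIndicator : Tendsto (summatory oddPrimeIndicator) atTop atTop := by
  refine (tendsto_atTop_add_const_right _ (-1)
    (tendsto_natCast_atTop_atTop.comp Nat.tendsto_primeCounting)).congr' ?_
  filter_upwards [eventually_ge_atTop 2] with n hn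
  simp [← summatory_oddPrimeIndicator_add_one hn]

lemma regularlyVarying_summatory_oddPrimeIndicator :
    RegularlyVarying (summatory oddPrimeIndicator) 1 := by
  have hquot : RegularlyVarying (fun n : ℕ ↦ (n : ℝ) / Real.log n) 1 := by
    simpa using! regularlyVarying_natCast.div regularlyVarying_log_natCast
  have hone : (fun _ : ℕ ↦ (1 : ℝ)) =o[atTop] summatory oddPrimeIndicator :=
    isLittleO_const_left.mpr (.inr
      (tendsto_norm_atTop_atTop.comp tendsto_summatory_oddPrimeIndicator))
  refine hquot.congr_isEquivalent (primeCounting_isEquivalent.symm.trans ?_)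
  refine (IsEquivalent.refl.add_isLittleO hone).congr_left ?_
  filter_upwards [eventually_ge_atTop 2] with n hn
  exact summatory_oddPrimeIndicator_add_one hn

section Convolution

open Finset.HasAntidiagonal (antidiagonal mem_antidiagonal)

lemma sum_mul_summatory_eq_summatory_antidiagonal (a b : ℕ → ℝ) (n : ℕ) :
    ∑ p ∈ Finset.Icc 0 n, a p * summatory b (n - p) =
      summatory (fun m ↦ ∑ x ∈ antidiagonal m, a x.1 * b x.2) n := by
  simp only [summatory, ← Nat.range_succ_eq_Icc_zero, Finset.mul_sum,
    Finset.Nat.sum_antidiagonal_eq_sum_range_succ fun p q ↦ a p * b q]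
  rw [Finset.sum_range_diag_flip (n + 1) fun p q ↦ a p * b q]
  refine Finset.sum_congr rfl fun p hp ↦ ?_
  rw [Nat.sub_add_comm (Finset.mem_range_succ_iff.mp hp)]

lemma summatory_two_mul_of_odd_eq_zero {w : ℕ → ℝ} (hw : ∀ m, Odd m → w m = 0) (n : ℕ) :
    summatory w (2 * n) = ∑ k ∈ Finset.Icc 0 n, w (2 * k) := by
  simp only [summatory, ← Nat.range_succ_eq_Icc_zero]
  induction n with
  | zero => simp
  | succ n ih =>
    rw [Finset.sum_range_succ _ (n + 1), ← ih, mul_add_one, Finset.sum_range_succ,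
      Finset.sum_range_succ, hw _ (odd_two_mul_add_one n), add_zero]

lemma sum_antidiagonal_oddPrimeIndicator_of_odd {m : ℕ} (hm : Odd m) :
    ∑ x ∈ antidiagonal m, oddPrimeIndicator x.1 * oddPrimeIndicator x.2 = 0 := by
  refine Finset.sum_eq_zero fun x hx ↦ ?_
  rw [← mem_antidiagonal.mp hx] at hm
  simp only [oddPrimeIndicator, Set.indicator_apply, mul_ite_zero, ite_mul]
  grind

lemma two_mul_card_filter_le_of_swap_mem {α : Type*} [LinearOrder α] {s : Finset (α × α)}
    (hs : ∀ x ∈ s, x.swap ∈ s) :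
    2 * (s.filter fun x ↦ x.1 ≤ x.2).card = s.card + (s.filter fun x ↦ x.1 = x.2).card := by
  have hswap : (s.filter fun x ↦ x.2 ≤ x.1).card = (s.filter fun x ↦ x.1 ≤ x.2).card :=
    Finset.card_bij' (fun x _ ↦ x.swap) (fun x _ ↦ x.swap) (by simp_all) (by simp_all)
      (by simp) (by simp)
  have hunion : (s.filter fun x ↦ x.1 ≤ x.2) ∪ (s.filter fun x ↦ x.2 ≤ x.1) = s := by
    simp [← Finset.filter_or, le_total]
  have hinter : (s.filter fun x ↦ x.1 ≤ x.2) ∩ (s.filter fun x ↦ x.2 ≤ x.1) =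
      s.filter fun x ↦ x.1 = x.2 := by
    simp [← Finset.filter_and, le_antisymm_iff]
  have hcard := Finset.card_union_add_card_inter (s.filter fun x ↦ x.1 ≤ x.2)
    (s.filter fun x ↦ x.2 ≤ x.1)
  rw [hunion, hinter, hswap] at hcard
  rw [hcard, two_mul]

lemma two_mul_Q2 (k : ℕ) :
    2 * (Q2 k : ℝ) =
      ∑ x ∈ antidiagonal (2 * k), oddPrimeIndicator x.1 * oddPrimeIndicator x.2 +
        oddPrimeIndicator k := by
  set s := (antidiagonal (2 * k)).filter fun x ↦
    (x.1.Prime ∧ Odd x.1) ∧ x.2.Prime ∧ Odd x.2 with hs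
  have hQ2 : Q2 k = (s.filter fun x ↦ x.1 ≤ x.2).card := by
    unfold Q2
    congr 1
    ext x
    grind [mem_antidiagonal]
  have hsum : ∑ x ∈ antidiagonal (2 * k), oddPrimeIndicator x.1 * oddPrimeIndicator x.2 =
      s.card := by
    rw [hs, Finset.natCast_card_filter]
    simp only [oddPrimeIndicator, Set.indicator_apply, Set.mem_ofPred_eq, Pi.one_apply,
      ite_zero_mul_ite_zero, mul_one]
  have hdiag : oddPrimeIndicator k = (s.filter fun x ↦ x.1 = x.2).card := by
    have hfilter : (s.filter fun x ↦ x.1 = x.2) = Finset.filter (fun x ↦ x.1.Prime ∧ Odd x.1)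
        {(k, k)} := by
      ext x
      grind [mem_antidiagonal]
    rw [hfilter, Finset.natCast_card_filter, Finset.sum_singleton]
    simp [oddPrimeIndicator, Set.indicator_apply]
  rw [hQ2, hsum, hdiag]
  exact_mod_cast two_mul_card_filter_le_of_swap_mem (by grind [mem_antidiagonal, Prod.swap])

end Convolution

lemma two_mul_summatory_Q2 (n : ℕ) :
    2 * summatory (fun k ↦ Q2 k) n =
      ∑ p ∈ Finset.Icc 0 (2 * n), oddPrimeIndicator p * summatory oddPrimeIndicator (2 * n - p) +
        summatory oddPrimeIndicator n := by
  rw [sum_mul_summatory_eq_summatory_antidiagonal,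
    summatory_two_mul_of_odd_eq_zero fun m hm ↦ sum_antidiagonal_oddPrimeIndicator_of_odd hm]
  simp only [summatory, Finset.mul_sum, two_mul_Q2, Finset.sum_add_distrib]

lemma summatory_Q2_isEquivalent :
    summatory (fun k ↦ Q2 k) ~[atTop]
      summatory oddPrimeIndicator * summatory oddPrimeIndicator := by
  have hS := regularlyVarying_summatory_oddPrimeIndicator
  have hpairs := (tendsto_sum_mul_summatory_div oddPrimeIndicator_nonneg oddPrimeIndicator_nonneg
    hS hS one_pos).comp (tendsto_id.const_mul_atTop' two_pos)
  have hdouble := hS 2 two_pos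
  have hfloor (n : ℕ) : ⌊(2 * n : ℝ)⌋₊ = 2 * n := by exact_mod_cast Nat.floor_natCast (2 * n)
  simp only [hfloor, Real.rpow_one] at hdouble
  have hinv := tendsto_summatory_oddPrimeIndicator.inv_tendsto_atTop
  have hne := hS.eventually_ne_zero
  refine (isEquivalent_iff_tendsto_one (hne.mono fun n hn ↦ mul_ne_zero hn hn)).mpr ?_
  have hlim := ((hpairs.mul (hdouble.pow 2)).add hinv).div_const 2
  norm_num at hlim
  refine hlim.congr' ?_
  filter_upwards [hne, (tendsto_id.const_mul_atTop' two_pos).eventually hne] with n hn hn2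
  have hQ2 := two_mul_summatory_Q2 n
  simp only [Pi.div_apply, id_eq] at hn2 ⊢
  field_simp
  exact hQ2.symm

lemma regularlyVarying_summatory_Q2 : RegularlyVarying (summatory fun k ↦ Q2 k) 2 := by
  have hS := regularlyVarying_summatory_oddPrimeIndicator
  simpa [one_add_one_eq_two] using (hS.mul hS).congr_isEquivalent summatory_Q2_isEquivalent.symm

lemma sum_Icc_three_mul_Q2 (f : ℕ → ℝ) (n : ℕ) :
    ∑ k ∈ Finset.Icc 3 n, f k * Q2 k = ∑ k ∈ Finset.Icc 0 n, f k * Q2 k := by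
  refine Finset.sum_subset (Finset.Icc_subset_Icc_left (Nat.zero_le 3)) fun k hk hk3 ↦ ?_
  have hk_lt : k < 3 := by grind
  have hQ2 : Q2 k = 0 := by interval_cases k <;> decide
  simp [hQ2]

-- `2 / (2 + d)` is the `d`-th moment of the limiting distribution function `t ^ 2` on `[0, 1]`.
theorem second_moment_goldbach_number_general (d : ℕ) :
    Tendsto (fun n : ℕ ↦
        (∑ k ∈ Finset.Icc 3 n, (k : ℝ) ^ d * (Q2 k : ℝ)) /
          ((n : ℝ) ^ d * ∑ k ∈ Finset.Icc 3 n, (Q2 k : ℝ)))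
      atTop (𝓝 (2 / (2 + d))) := by
  have hsum (n : ℕ) : ∑ k ∈ Finset.Icc 3 n, (Q2 k : ℝ) = summatory (fun k ↦ Q2 k) n := by
    simpa [summatory] using sum_Icc_three_mul_Q2 1 n
  simp only [hsum, sum_Icc_three_mul_Q2 fun k ↦ (k : ℝ) ^ d]
  exact tendsto_sum_pow_mul_div_summatory (fun k ↦ (Q2 k).cast_nonneg) two_pos
    regularlyVarying_summatory_Q2 d

/-- The limit of `(Σ_{2<k≤n} k²·Q₂(2k)) / (n² · Σ_{2<k≤n} Q₂(2k))` as `n → ∞` is `1/2`;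
equivalently, `E(Gₙ²)/n² → 1/2`. -/
theorem second_moment_goldbach_number :
    Tendsto (fun n : ℕ =>
        (∑ k ∈ Finset.Icc 3 n, (k : ℝ) ^ 2 * (Q2 k : ℝ)) /
          ((n : ℝ) ^ 2 * ∑ k ∈ Finset.Icc 3 n, (Q2 k : ℝ)))
      atTop (𝓝 (1 / 2)) := by
  simpa [show (2 / (2 + 2) : ℝ) = 1 / 2 by norm_num] using second_moment_goldbach_number_general 2
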